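/- There exists no (2,1,2) complete 2-MDP convolutional code over the field F_5 with 5 elements: there is no triple (H_2, H_1, H_0) of row vectors in F_5^{1×2} such that h_1 and h_2 are coprime in F_5[z] and the complete 2-MDP minor condition holds. -/

import Mathlib

/-!
Write `h₁ = a₀ + a₁ z + a₂ z²` and `h₂ = b₀ + b₁ z + b₂ z²`. The minor condition
cannot be met over `F_5`.

The minors on the columns (0-based) `{0,2,4}`, `{0,4,8}`, `{4,6,8}` and their `h₂`-analogues are
monomials, so all six coefficients are nonzero. Scaling `h₁`, `h₂` and the variable `z` multiplies
every minor by a unit, so only the three invariants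
`a = a₀ a₂ / a₁²`, `x = a₀ b₁ / (a₁ b₀)`, `y = a₀ b₂ / (a₂ b₀)` matter: up to units the pair is
`1 + z + a z²`, `1 + x z + a y z²`. Nine further minors become polynomials in `a, x, y`
(for instance `{0,4,6}` gives `1 - a` and `{2,4,6}` gives `1 - 2a`), and a check of the triples in
`(ZMod 5)³` shows that they cannot all be nonzero (`no_invariants`).
-/

open Polynomial

/-- The partial parity-check matrix `𝔥_j` built from coefficient matrices
`H_0, …, H_ν ∈ R^{(n-k)×n}`: the block in block-row `r ∈ {0,…,j}` and block-column
`c ∈ {0,…,ν+j}` is `H_{ν+r-c}` if `r ≤ c ≤ ν + r` and the zero matrix otherwise. -/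
def pcm {R : Type*} [CommRing R] (n k ν : ℕ) (hn : 0 < n) (hnk : k < n)
    (H : Fin (ν + 1) → Matrix (Fin (n - k)) (Fin n) R) (j : ℕ) :
    Matrix (Fin ((j + 1) * (n - k))) (Fin ((ν + j + 1) * n)) R :=
  fun p q =>
    if h : (p : ℕ) / (n - k) ≤ (q : ℕ) / n ∧ (q : ℕ) / n ≤ ν + (p : ℕ) / (n - k) then
      H ⟨ν + (p : ℕ) / (n - k) - (q : ℕ) / n, by omega⟩
        ⟨(p : ℕ) % (n - k), Nat.mod_lt _ (by omega)⟩
        ⟨(q : ℕ) % n, Nat.mod_lt _ hn⟩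
    else 0

/-- A (0-based) strictly increasing choice `js` of `(j+1)(n-k)` columns of `𝔥_j` is
admissible if (with 1-based indices) `j_{(n-k)s+1} > sn` and `j_{(n-k)s} ≤ sn + νn`
for all `s = 1, …, j`. -/
def Admissible (n k ν j : ℕ) (js : Fin ((j + 1) * (n - k)) → Fin ((ν + j + 1) * n)) : Prop :=
  StrictMono js ∧
  ∀ s : ℕ, 1 ≤ s → s ≤ j →
    ∀ (h1 : (n - k) * s < (j + 1) * (n - k)) (h2 : (n - k) * s - 1 < (j + 1) * (n - k)),
      s * n ≤ (js ⟨(n - k) * s, h1⟩ : ℕ) ∧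
      (js ⟨(n - k) * s - 1, h2⟩ : ℕ) < s * n + ν * n

/-- The complete `j`-MDP minor condition: every full size minor of `𝔥_j` formed by an
admissible choice of columns is nonzero. -/
def CompleteJMDP {F : Type*} [Field F] (n k ν : ℕ) (hn : 0 < n) (hnk : k < n)
    (H : Fin (ν + 1) → Matrix (Fin (n - k)) (Fin n) F) (j : ℕ) : Prop :=
  ∀ js : Fin ((j + 1) * (n - k)) → Fin ((ν + j + 1) * n), Admissible n k ν j js →
    ((pcm n k ν hn hnk H j).submatrix id js).det ≠ 0

/-- `hpoly c0 c1 c2 = c0 + c1·z + c2·z²`. -/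
noncomputable def hpoly {F : Type*} [Field F] (c0 c1 c2 : F) : Polynomial F :=
  C c0 + C c1 * X + C c2 * X ^ 2

/-- The triple `(H_0, H_1, H_2)` of `1 × 2` coefficient matrices `H_i = [h_{1,i}, h_{2,i}]`
(parameters `n = 2`, `k = 1`, `ν = 2`). -/
def Htriple {F : Type*} [Field F] (h10 h11 h12 h20 h21 h22 : F) :
    Fin (2 + 1) → Matrix (Fin (2 - 1)) (Fin 2) F :=
  ![Matrix.of fun _ c => ![h10, h20] c,
    Matrix.of fun _ c => ![h11, h21] c,
    Matrix.of fun _ c => ![h12, h22] c]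

/-- `(H_2, H_1, H_0)` defines a `(2,1,2)` complete `j`-MDP convolutional code:
`h_1(z) = h_{1,0} + h_{1,1}z + h_{1,2}z²` and `h_2(z) = h_{2,0} + h_{2,1}z + h_{2,2}z²`
are coprime in `F[z]` (equivalently, `H(z) = [h_1(z) h_2(z)]` is left prime) and the
complete `j`-MDP minor condition holds. -/
def Is212 {F : Type*} [Field F] (j : ℕ) (h10 h11 h12 h20 h21 h22 : F) : Prop :=
  IsCoprime (hpoly h10 h11 h12) (hpoly h20 h21 h22) ∧
  CompleteJMDP 2 1 2 (by norm_num) (by norm_num) (Htriple h10 h11 h12 h20 h21 h22) j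

/-- The sliding matrix `𝔥_2` for `(n, k, ν) = (2, 1, 2)`, written out. -/
def slidingMatrix {F : Type*} [Field F] (a0 a1 a2 b0 b1 b2 : F) : Matrix (Fin 3) (Fin 10) F :=
  !![a2, b2, a1, b1, a0, b0, 0, 0, 0, 0;
     0, 0, a2, b2, a1, b1, a0, b0, 0, 0;
     0, 0, 0, 0, a2, b2, a1, b1, a0, b0]

lemma pcm_eq_slidingMatrix {F : Type*} [Field F] (a0 a1 a2 b0 b1 b2 : F) :
    pcm 2 1 2 (by norm_num) (by norm_num) (Htriple a0 a1 a2 b0 b1 b2) 2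
      = slidingMatrix a0 a1 a2 b0 b1 b2 := by
  ext p q
  change Fin 3 at p
  change Fin 10 at q
  fin_cases p <;> fin_cases q <;> rfl

/-- The minor condition for `(n, k, ν, j) = (2, 1, 2, 2)`, with admissibility of the columns
`i < j < k` (0-based) unfolded to inequalities. -/
lemma minor_ne_zero {F : Type*} [Field F] {a0 a1 a2 b0 b1 b2 : F}
    (h : CompleteJMDP 2 1 2 (by norm_num) (by norm_num) (Htriple a0 a1 a2 b0 b1 b2) 2)
    (i j k : Fin 10) (hc : i < j ∧ j < k ∧ 2 ≤ j ∧ 4 ≤ k ∧ i < 6 ∧ j < 8) :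
    ((slidingMatrix a0 a1 a2 b0 b1 b2).submatrix id ![i, j, k]).det ≠ 0 := by
  obtain ⟨hij, hjk, hj, hk, hi, hj'⟩ := hc
  have hadm : Admissible 2 1 2 2 (![i, j, k] : Fin 3 → Fin 10) := by
    refine ⟨?_, ?_⟩
    · change StrictMono (![i, j, k] : Fin 3 → Fin 10)
      rw [Fin.strictMono_iff_lt_succ]
      intro s
      fin_cases s
      · exact hij
      · exact hjk
    · intro s hs1 hs2 h1 h2
      interval_cases s
      · exact ⟨hj, hi⟩
      · exact ⟨hk, hj'⟩
  have := h _ hadm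
  rw [pcm_eq_slidingMatrix] at this
  exact this

/-- The finite check: no values of the three scaling invariants in `ZMod 5` keep all the
normalized minors nonzero. -/
lemma no_invariants : ∀ a x y : ZMod 5, a ≠ 0 → x ≠ 0 → y ≠ 0 → x ≠ 1 → x ≠ y → a ≠ 1 →
    x ≠ a → x ≠ a * y → 1 ≠ 2 * a →
    x - a - a * x ≠ 0 → x - a * y - a * x ≠ 0 → x - a * y - a ≠ 0 → False := by
  decide

/-- There exists no `(2,1,2)` complete `2`-MDP convolutional code over
the field `F_5` with 5 elements. -/
theorem stmt13 (F : Type*) [Field F] [Fintype F] (hF : Fintype.card F = 5) :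
    ¬ ∃ h10 h11 h12 h20 h21 h22 : F, Is212 2 h10 h11 h12 h20 h21 h22 := by
  rintro ⟨a0, a1, a2, b0, b1, b2, -, h⟩
  have m := minor_ne_zero h
  have ha2 := m 0 2 4 (by decide)
  have ha1 := m 0 4 8 (by decide)
  have ha0 := m 4 6 8 (by decide)
  have hb2 := m 1 3 5 (by decide)
  have hb1 := m 1 5 9 (by decide)
  have hb0 := m 5 7 9 (by decide)
  have m458 := m 4 5 8 (by decide)
  have m045 := m 0 4 5 (by decide)
  have m046 := m 0 4 6 (by decide)
  have m047 := m 0 4 7 (by decide)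
  have m056 := m 0 5 6 (by decide)
  have m246 := m 2 4 6 (by decide)
  have m247 := m 2 4 7 (by decide)
  have m256 := m 2 5 6 (by decide)
  have m346 := m 3 4 6 (by decide)
  simp [Matrix.det_fin_three, slidingMatrix] at ha2 ha1 ha0 hb2 hb1 hb0
  simp [Matrix.det_fin_three, slidingMatrix] at m458 m045 m046 m047 m056 m246 m247 m256 m346
  obtain ⟨⟨-, ha1⟩, -⟩ := ha1
  obtain ⟨⟨-, hb1⟩, -⟩ := hb1
  let e : F ≃+* ZMod 5 := (ZMod.ringEquivOfPrime F (by norm_num) hF).symm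
  have key (a x y : F) (h1 : a ≠ 0) (h2 : x ≠ 0) (h3 : y ≠ 0) (h4 : x ≠ 1) (h5 : x ≠ y)
      (h6 : a ≠ 1) (h7 : x ≠ a) (h8 : x ≠ a * y) (h9 : 1 ≠ 2 * a) (h10 : x - a - a * x ≠ 0)
      (h11 : x - a * y - a * x ≠ 0) (h12 : x - a * y - a ≠ 0) : False := by
    rw [← e.injective.ne_iff] at h1 h2 h3 h4 h5 h6 h7 h8 h9 h10 h11 h12
    simp only [map_zero, map_one, map_mul, map_sub, map_ofNat] at *
    exact no_invariants (e a) (e x) (e y) h1 h2 h3 h4 h5 h6 h7 h8 h9 h10 h11 h12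
  -- The scaling invariants, recorded without denominators.
  obtain ⟨a, ha⟩ : ∃ a, a0 * a2 = a * a1 ^ 2 := ⟨a0 * a2 / a1 ^ 2, by field_simp⟩
  obtain ⟨x, hx⟩ : ∃ x, a0 * b1 = x * (a1 * b0) := ⟨a0 * b1 / (a1 * b0), by field_simp⟩
  obtain ⟨y, hy⟩ : ∃ y, a0 * b2 = y * (a2 * b0) := ⟨a0 * b2 / (a2 * b0), by field_simp⟩
  apply key a x y
  -- If a normalized minor vanished, so would the corresponding minor (or coefficient),
  -- since the two differ by a unit.
  all_goals grind
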